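/- For any positive real r and any polygon (measurable region) of area P in the plane, any trajectory such that every point of the region is within distance r of the trajectory must have length at least (P − πr²)/(2r). -/

import Mathlib

open MeasureTheory Real

lemma aux_meas (R d : ℝ) : MeasurableSet {z : ℝ × ℝ | (z.1 - d) ^ 2 + z.2 ^ 2 ≤ R ^ 2 ∧
    R ^ 2 < z.1 ^ 2 + z.2 ^ 2} := by
  have h1 : MeasurableSet {z : ℝ × ℝ | (z.1 - d) ^ 2 + z.2 ^ 2 ≤ R ^ 2} :=
    measurableSet_le (by fun_prop) (by fun_prop)
  have h2 : MeasurableSet {z : ℝ × ℝ | R ^ 2 < z.1 ^ 2 + z.2 ^ 2} :=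
    measurableSet_lt (by fun_prop) (by fun_prop)
  exact h1.inter h2

lemma aux_slice (R d : ℝ) (hR : 0 ≤ R) (hd : 0 ≤ d) :
    volume {z : ℝ × ℝ | (z.1 - d) ^ 2 + z.2 ^ 2 ≤ R ^ 2 ∧ R ^ 2 < z.1 ^ 2 + z.2 ^ 2}
      ≤ ENNReal.ofReal (2 * R * d) := by
  have hm : MeasurableSet {z : ℝ × ℝ | (z.1 - d) ^ 2 + z.2 ^ 2 ≤ R ^ 2 ∧
      R ^ 2 < z.1 ^ 2 + z.2 ^ 2} := by
    exact aux_meas R d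
  rw [Measure.volume_eq_prod, Measure.prod_apply_symm hm]
  calc _ ≤ ∫⁻ y : ℝ, (Set.Icc (-R) R).indicator (fun _ => ENNReal.ofReal d) y := by
        apply lintegral_mono
        intro y
        by_cases hy : y ∈ Set.Icc (-R) R
        · rw [Set.indicator_of_mem hy]
          have hw : 0 ≤ R ^ 2 - y ^ 2 := by nlinarith [hy.1, hy.2]
          have hs := Real.sq_sqrt hw
          have hs0 := Real.sqrt_nonneg (R ^ 2 - y ^ 2)
          set w := Real.sqrt (R ^ 2 - y ^ 2)
          calc _ ≤ volume (Set.Icc w (w + d)) := by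
                apply measure_mono
                rintro a ⟨h1, h2⟩
                simp only at h1 h2
                have h3 : |a - d| ≤ w := abs_le_of_sq_le_sq (by linarith) hs0
                have h4 : w < |a| := by
                  rw [← abs_of_nonneg hs0]
                  exact sq_lt_sq.mp (by linarith)
                rw [abs_le] at h3
                rcases lt_abs.mp h4 with h | h
                · exact ⟨h.le, by linarith⟩
                · linarith
            _ = ENNReal.ofReal d := by rw [Real.volume_Icc]; congr 1; ring
        · rw [Set.indicator_of_notMem hy]
          have : (fun x : ℝ => (x, y)) ⁻¹' {z : ℝ × ℝ | (z.1 - d) ^ 2 + z.2 ^ 2 ≤ R ^ 2 ∧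
              R ^ 2 < z.1 ^ 2 + z.2 ^ 2} = ∅ := by
            ext a
            simp only [Set.mem_preimage, Set.mem_ofPred_eq, Set.mem_empty_iff_false, iff_false]
            rintro ⟨h1, -⟩
            apply hy
            exact abs_le.mp (abs_le_of_sq_le_sq (by nlinarith [sq_nonneg (a - d)]) hR)
          beta_reduce
          rw [this]; simp
    _ = ENNReal.ofReal d * volume (Set.Icc (-R) R) := by
        rw [lintegral_indicator_const measurableSet_Icc]
    _ = _ := by
        rw [Real.volume_Icc, ← ENNReal.ofReal_mul hd]; congr 1; ring

lemma aux_diff (R : ℝ) (hR : 0 ≤ R) (q p : EuclideanSpace ℝ (Fin 2)) :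
    volume (Metric.closedBall q R \ Metric.closedBall p R) ≤ ENNReal.ofReal (2 * R * dist q p) := by
  by_cases hqp : q = p
  · simp [hqp]
  have hv : ‖q - p‖ ≠ 0 := by simpa [sub_eq_zero] using hqp
  obtain ⟨b, hb⟩ := Orthonormal.exists_orthonormalBasis_extension_of_card_eq
    (𝕜 := ℝ) (E := EuclideanSpace ℝ (Fin 2)) (ι := Fin 2) (by simp)
    (v := fun _ => (‖q - p‖⁻¹ : ℝ) • (q - p)) (s := {0}) (by
      constructor
      · rintro ⟨i, hi⟩
        simp [norm_smul, hv]
      · rintro ⟨i, hi⟩ ⟨j, hj⟩ hij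
        simp only [Set.mem_singleton_iff] at hi hj
        subst hi; subst hj
        exact absurd rfl hij)
  have hb0 := hb 0 rfl
  have hq : q - p = ‖q - p‖ • b 0 := by
    rw [hb0, smul_smul, mul_inv_cancel₀ hv, one_smul]
  have hr0 : b.repr (q - p) 0 = ‖q - p‖ := by
    rw [hq, map_smul, b.repr_self, norm_smul]; simp
  have hr1 : b.repr (q - p) 1 = 0 := by
    rw [hq, map_smul, b.repr_self]; simp
  have hmp : MeasurePreserving (fun z : EuclideanSpace ℝ (Fin 2) =>
      (b.repr (z - p) 0, b.repr (z - p) 1)) volume (volume : Measure (ℝ × ℝ)) :=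
    (volume_preserving_finTwoArrow ℝ).comp
      ((EuclideanSpace.volume_preserving_symm_measurableEquiv_toLp (Fin 2)).comp
        (b.measurePreserving_repr.comp (measurePreserving_sub_right volume p)))
  have hn : ∀ w, ‖w‖ ^ 2 = (b.repr w 0) ^ 2 + (b.repr w 1) ^ 2 := by
    intro w
    rw [← b.repr.norm_map w, EuclideanSpace.norm_sq_eq, Fin.sum_univ_two]
    simp
  have hset : Metric.closedBall q R \ Metric.closedBall p R =
      (fun z : EuclideanSpace ℝ (Fin 2) => (b.repr (z - p) 0, b.repr (z - p) 1)) ⁻¹'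
      {z : ℝ × ℝ | (z.1 - ‖q - p‖) ^ 2 + z.2 ^ 2 ≤ R ^ 2 ∧ R ^ 2 < z.1 ^ 2 + z.2 ^ 2} := by
    ext z
    simp only [Set.mem_sdiff, Metric.mem_closedBall, Set.mem_preimage, Set.mem_ofPred_eq, not_le,
      dist_eq_norm]
    have e1 := hn (z - q)
    have e2 : b.repr (z - q) = b.repr (z - p) - b.repr (q - p) := by
      rw [← map_sub]; congr 1; abel
    rw [e2] at e1
    simp only [PiLp.sub_apply, hr0, hr1, sub_zero] at e1
    rw [← e1, ← hn (z - p), sq_le_sq₀ (norm_nonneg _) hR, sq_lt_sq₀ hR (norm_nonneg _)]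
  have hm : MeasurableSet {z : ℝ × ℝ | (z.1 - ‖q - p‖) ^ 2 + z.2 ^ 2 ≤ R ^ 2 ∧
      R ^ 2 < z.1 ^ 2 + z.2 ^ 2} := by
    exact aux_meas R _
  rw [hset, hmp.measure_preimage hm.nullMeasurableSet, dist_eq_norm]
  exact aux_slice R _ hR (norm_nonneg _)

lemma aux_union (R δ : ℝ) (hR : 0 ≤ R) (hδ : 0 ≤ δ) (c : ℕ → EuclideanSpace ℝ (Fin 2))
    (hc : ∀ i, dist (c (i + 1)) (c i) ≤ δ) (n : ℕ) :
    volume (⋃ i ≤ n, Metric.closedBall (c i) R)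
      ≤ ENNReal.ofReal (π * R ^ 2 + n * (2 * R * δ)) := by
  induction n with
  | zero =>
    simp only [Nat.le_zero_eq, Set.iUnion_iUnion_eq_left, Nat.cast_zero, zero_mul, add_zero]
    rw [EuclideanSpace.volume_closedBall_fin_two]
    rw [← ENNReal.ofReal_pow hR, mul_comm π, ENNReal.ofReal_mul (by positivity)]
  | succ n ih =>
    calc _ ≤ volume ((⋃ i ≤ n, Metric.closedBall (c i) R) ∪
            (Metric.closedBall (c (n + 1)) R \ Metric.closedBall (c n) R)) := by
          apply measure_mono
          intro z hz
          simp only [Set.mem_iUnion, exists_prop, Set.mem_union, Set.mem_sdiff] at hz ⊢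
          obtain ⟨i, hi, hz⟩ := hz
          rcases Nat.le_succ_iff.mp hi with h | h
          · exact Or.inl ⟨i, h, hz⟩
          · subst h
            by_cases h' : z ∈ Metric.closedBall (c n) R
            · exact Or.inl ⟨n, le_rfl, h'⟩
            · exact Or.inr ⟨hz, h'⟩
      _ ≤ _ := measure_union_le _ _
      _ ≤ ENNReal.ofReal (π * R ^ 2 + n * (2 * R * δ)) + ENNReal.ofReal (2 * R * δ) := by
          gcongr
          refine (aux_diff R hR _ _).trans (ENNReal.ofReal_le_ofReal ?_)
          have := hc n
          gcongr
      _ = _ := by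
          rw [← ENNReal.ofReal_add (by positivity) (by positivity)]
          congr 1; push_cast; ring

/-- If the r-neighborhood of a rectifiable curve of length x (a 1-Lipschitz map on [0,x])
covers a measurable region of area P, then x ≥ (P − πr²)/(2r). -/
theorem length_ge_of_cover (r x : ℝ) (hr : 0 < r) (hx : 0 ≤ x)
    (γ : ℝ → EuclideanSpace ℝ (Fin 2)) (hγ : LipschitzOnWith 1 γ (Set.Icc 0 x))
    (P : Set (EuclideanSpace ℝ (Fin 2))) (hP : MeasurableSet P)
    (hPfin : volume P ≠ ⊤)
    (hcover : ∀ p ∈ P, ∃ t ∈ Set.Icc (0:ℝ) x, dist p (γ t) ≤ r) :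
    ((volume P).toReal - π * r ^ 2) / (2 * r) ≤ x := by
  have hL : ∀ s ∈ Set.Icc 0 x, ∀ t ∈ Set.Icc 0 x, dist (γ s) (γ t) ≤ |s - t| := by
    intro s hs t ht
    simpa [Real.dist_eq] using hγ.dist_le_mul s hs t ht
  have key : ∀ n : ℕ, (volume P).toReal ≤
      π * (r + x * (1 / ((n : ℝ) + 1))) ^ 2 + 2 * (r + x * (1 / ((n : ℝ) + 1))) * x := by
    intro n
    have hn : (0 : ℝ) < (n : ℝ) + 1 := by positivity
    obtain ⟨δ, hδ⟩ : ∃ δ, δ = x * (1 / ((n : ℝ) + 1)) := ⟨_, rfl⟩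
    have hδ0 : 0 ≤ δ := by rw [hδ]; positivity
    have hδx : ((n : ℝ) + 1) * δ = x := by rw [hδ]; field_simp
    rw [← hδ]
    have hmem : ∀ i : ℕ, min x (i * δ) ∈ Set.Icc 0 x := fun i =>
      ⟨le_min hx (by positivity), min_le_left _ _⟩
    have hc : ∀ i : ℕ, dist (γ (min x ((i + 1 : ℕ) * δ))) (γ (min x (i * δ))) ≤ δ := by
      intro i
      refine (hL _ (hmem _) _ (hmem _)).trans ?_
      push_cast
      rw [abs_le]
      constructor <;>
      rcases min_cases x (((i : ℝ) + 1) * δ) with h | h <;>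
      rcases min_cases x ((i : ℝ) * δ) with h' | h' <;> linarith
    have hU := aux_union (r + δ) δ (by positivity) hδ0 (fun i : ℕ => γ (min x (i * δ))) hc (n + 1)
    have hsub : P ⊆ ⋃ i ≤ n + 1, Metric.closedBall (γ (min x ((i : ℕ) * δ))) (r + δ) := by
      intro p hp
      obtain ⟨t, ht, hpt⟩ := hcover p hp
      obtain ⟨i, hi, h1, h2⟩ : ∃ i : ℕ, i ≤ n + 1 ∧ i * δ ≤ t ∧ t ≤ i * δ + δ := by
        rcases hδ0.eq_or_lt with h0 | h0
        · refine ⟨0, by omega, ?_, ?_⟩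
          · simpa using ht.1
          · rw [← h0] at hδx ⊢
            have := ht.2
            simp at hδx ⊢
            linarith
        · have hq : 0 ≤ t / δ := div_nonneg ht.1 hδ0
          refine ⟨⌊t / δ⌋₊, ?_, ?_, ?_⟩
          · apply Nat.floor_le_of_le
            rw [div_le_iff₀ h0]; push_cast; linarith [ht.2]
          · exact (le_div_iff₀ h0).mp (Nat.floor_le hq)
          · have := (div_lt_iff₀ h0).mp (Nat.lt_floor_add_one (t / δ))
            linarith
      simp only [Set.mem_iUnion, exists_prop, Metric.mem_closedBall]
      refine ⟨i, hi, (dist_triangle _ (γ t) _).trans (add_le_add hpt ?_)⟩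
      refine (hL _ ht _ (hmem i)).trans ?_
      rw [min_eq_right (h1.trans ht.2), abs_le]
      constructor <;> linarith
    have h := ENNReal.toReal_le_of_le_ofReal (by positivity) ((measure_mono hsub).trans hU)
    refine h.trans (le_of_eq ?_)
    push_cast
    linear_combination 2 * (r + δ) * hδx
  have hlim : Filter.Tendsto (fun n : ℕ => π * (r + x * (1 / ((n : ℝ) + 1))) ^ 2 +
      2 * (r + x * (1 / ((n : ℝ) + 1))) * x) Filter.atTop
      (nhds (π * (r + x * 0) ^ 2 + 2 * (r + x * 0) * x)) := by
    have h0 := tendsto_one_div_add_atTop_nhds_zero_nat (𝕜 := ℝ)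
    have hcont : Continuous (fun u : ℝ => π * (r + x * u) ^ 2 + 2 * (r + x * u) * x) := by
      fun_prop
    exact (hcont.tendsto 0).comp h0
  have hfin := ge_of_tendsto' hlim key
  rw [div_le_iff₀ (by positivity)]
  simp only [mul_zero, add_zero] at hfin
  linarith
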